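/- arXiv:2305.07567 — 2 statements merged into one kernel-verified Lean document; each statement's English description precedes it below -/
import Mathlib

section
/- Let M = (L(E), ρ) be a (q,r)-polymatroid on E = F_q^n and let H be a hyperplane of E. If some complement of H (a 1-dimensional subspace e with e ∩ H = 0 and e + H = E) is a loop of M, then P(M|_H; z) = ∑_{y 1-dimensional subspace of E, y ⊄ H} P(M/y; z) as polynomials in ℤ[z]. -/
/-- The characteristic polynomial of the minor `M([X,Y])` of a `(q,r)`-polymatroid
(more generally, of a weighted lattice) with rank function `ρ`:
`P(M([X,Y]); z) = ∑_{X ≤ A ≤ Y} μ(X,A) · z^(ρ(Y) - ρ(A))`. -/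
noncomputable def charPoly {L : Type*} [Lattice L] (μ : L → L → ℤ) (ρ : L → ℕ) (X Y : L) :
    Polynomial ℤ :=
  ∑ᶠ A ∈ Set.Icc X Y, μ X A • ((Polynomial.X : Polynomial ℤ) ^ (ρ Y - ρ A))

/-!
Two applications of Weisner's theorem on Möbius functions of lattices. Its meet form says that the
Möbius values `μ y A`, summed over the `y ≤ A` with `y ⊓ H = X`, cancel as soon as `A ≰ H`; summing
over `A` this becomes a deletion–contraction identity relating `P(M([X,H]))`, `P(M([X,Y]))` and the
`P(M([y,Y]))` with `y ⊓ H = X`. Its join form says that `μ X A`, summed over the `A` with a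
prescribed join with `e`, cancels if `e ≰ X`; when `e` is a loop the rank is constant on each such
family, so `P(M([X,Y])) = 0`. By modularity, if `Y` covers `H`, the `y > X` in `[X,Y]` with
`y ⊓ H = X` are the atoms of `[X,Y]` not below `H`.
-/

section Moebius

open Finset IncidenceAlgebra

theorem eq_mu_of_recursion {L R : Type*} [PartialOrder L] [LocallyFiniteOrder L] [DecidableEq L]
    [AddCommGroup R] [One R] {μ : L → L → R} (hμ_refl : ∀ X, μ X X = 1)
    (hμ_rec : ∀ X Y, X < Y → μ X Y = -∑ᶠ Z ∈ Set.Ico X Y, μ X Z) {X Y : L} (hXY : X ≤ Y) :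
    μ X Y = mu R X Y := by
  induction hcard : #(Icc X Y) using Nat.strong_induction_on generalizing Y with
  | _ k ih =>
    obtain rfl | hlt := hXY.eq_or_lt
    · rw [hμ_refl, mu_self]
    · rw [hμ_rec X Y hlt, mu_eq_neg_sum_Ico_of_ne hlt.ne, ← coe_Ico, finsum_mem_coe_finset]
      refine congrArg Neg.neg (sum_congr rfl fun Z hZ => ?_)
      obtain ⟨hXZ, hZY⟩ := mem_Ico.1 hZ
      exact ih _ (hcard ▸ card_lt_card (Icc_ssubset_Icc_right hXY le_rfl hZY)) hXZ rfl

theorem sum_mu_of_sup_eq (R : Type*) {L : Type*} [Ring R] [SemilatticeSup L]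
    [LocallyFiniteOrder L] [DecidableEq L] {X e : L} (he : ¬ e ≤ X) (Y : L) :
    ∑ A ∈ Icc X Y with A ⊔ e = Y, mu R X A = 0 := by
  -- The indicator of `A ⊔ e = Y` is the sum of `mu R B Y` over `B ∈ [A ⊔ e, Y]`.
  calc ∑ A ∈ Icc X Y with A ⊔ e = Y, mu R X A
      = ∑ A ∈ Icc X Y, ∑ B ∈ Icc (A ⊔ e) Y, mu R X A * mu R B Y := by
        simp only [← mul_sum, sum_Icc_mu_left, mul_ite, mul_one, mul_zero, sum_filter]
    _ = ∑ B ∈ Icc (X ⊔ e) Y, ∑ A ∈ Icc X B, mu R X A * mu R B Y := by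
        refine sum_comm' fun A B => ?_
        simp only [mem_Icc, sup_le_iff]
        exact ⟨fun ⟨⟨hXA, _⟩, ⟨hAB, heB⟩, hBY⟩ => ⟨⟨hXA, hAB⟩, ⟨hXA.trans hAB, heB⟩, hBY⟩,
          fun ⟨⟨hXA, hAB⟩, ⟨_, heB⟩, hBY⟩ => ⟨⟨hXA, hAB.trans hBY⟩, ⟨hAB, heB⟩, hBY⟩⟩
    _ = 0 := by
        refine sum_eq_zero fun B hB => ?_
        have hXB : X ≠ B := fun h => he (h ▸ le_sup_right.trans (mem_Icc.1 hB).1)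
        rw [← sum_mul, sum_Icc_mu_right, if_neg hXB, zero_mul]

theorem sum_mu_of_inf_eq (R : Type*) {L : Type*} [Ring R] [SemilatticeInf L]
    [LocallyFiniteOrder L] [DecidableEq L] {A H : L} (hA : ¬ A ≤ H) (X : L) :
    ∑ y ∈ Icc X A with y ⊓ H = X, mu R y A = 0 := by
  have hdual := sum_mu_of_sup_eq R (X := OrderDual.toDual A) (e := OrderDual.toDual H) hA
    (OrderDual.toDual X)
  rw [Icc_toDual, sum_filter, sum_map] at hdual
  simpa [sum_filter, ← _root_.toDual_inf] using hdual

theorem sum_Ioc_mu_of_inf_eq (R : Type*) {L : Type*} [Ring R] [SemilatticeInf L]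
    [LocallyFiniteOrder L] [DecidableEq L] {X A H : L} (hXA : X ≤ A) (hXH : X ≤ H)
    (hA : ¬ A ≤ H) :
    ∑ y ∈ Ioc X A with y ⊓ H = X, mu R y A = -mu R X A := by
  have hsum := sum_mu_of_inf_eq R hA X
  rw [← Ioc_insert_left hXA, filter_insert, if_pos (inf_eq_left.2 hXH),
    sum_insert (by simp)] at hsum
  exact eq_neg_of_add_eq_zero_right hsum

end Moebius

theorem rank_sup_eq_of_loop {L : Type*} [Lattice L] {ρ : L → ℕ} {X A e : L} (hmono : Monotone ρ)
    (hsubmod : ∀ A B, ρ (A ⊔ B) + ρ (A ⊓ B) ≤ ρ A + ρ B) (hloop : ρ (X ⊔ e) = ρ X)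
    (hXA : X ≤ A) : ρ (A ⊔ e) = ρ A := by
  have hsub := hsubmod A (X ⊔ e)
  rw [← sup_assoc, sup_eq_left.2 hXA, hloop] at hsub
  have hX : ρ X ≤ ρ (A ⊓ (X ⊔ e)) := hmono (le_inf hXA le_sup_left)
  have hA : ρ A ≤ ρ (A ⊔ e) := hmono le_sup_left
  lia

section CharPoly

open Finset IncidenceAlgebra

variable {L : Type*} [Lattice L] [LocallyFiniteOrder L] {ρ : L → ℕ} {X Y H e : L}

theorem charPoly_eq_sum_Icc (μ : L → L → ℤ) (ρ : L → ℕ) (X Y : L) :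
    charPoly μ ρ X Y = ∑ A ∈ Icc X Y, μ X A • (Polynomial.X : Polynomial ℤ) ^ (ρ Y - ρ A) := by
  rw [charPoly, ← coe_Icc, finsum_mem_coe_finset]

variable [DecidableEq L]

theorem charPoly_eq_charPoly_mu {μ : L → L → ℤ} (hμ_refl : ∀ X, μ X X = 1)
    (hμ_rec : ∀ X Y, X < Y → μ X Y = -∑ᶠ Z ∈ Set.Ico X Y, μ X Z) (ρ : L → ℕ) (X Y : L) :
    charPoly μ ρ X Y = charPoly (mu ℤ) ρ X Y :=
  finsum_mem_congr rfl fun _ hA => by rw [eq_mu_of_recursion hμ_refl hμ_rec hA.1]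

theorem charPoly_eq_zero_of_loop (he : ¬ e ≤ X) (heY : e ≤ Y)
    (hloop : ∀ A ∈ Set.Icc X Y, ρ (A ⊔ e) = ρ A) : charPoly (mu ℤ) ρ X Y = 0 := by
  have hmaps : ∀ A ∈ Icc X Y, A ⊔ e ∈ Icc X Y := fun A hA =>
    mem_Icc.2 ⟨(mem_Icc.1 hA).1.trans le_sup_left, sup_le (mem_Icc.1 hA).2 heY⟩
  rw [charPoly_eq_sum_Icc, ← sum_fiberwise_of_maps_to hmaps]
  refine sum_eq_zero fun B hB => ?_
  have hfiber : {A ∈ Icc X Y | A ⊔ e = B} = {A ∈ Icc X B | A ⊔ e = B} := by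
    ext A
    simp only [mem_filter, mem_Icc, and_congr_left_iff, and_congr_right_iff]
    rintro rfl -
    exact iff_of_true (le_sup_left.trans (mem_Icc.1 hB).2) le_sup_left
  calc ∑ A ∈ Icc X Y with A ⊔ e = B, mu ℤ X A • (Polynomial.X : Polynomial ℤ) ^ (ρ Y - ρ A)
      = ∑ A ∈ Icc X Y with A ⊔ e = B, mu ℤ X A • Polynomial.X ^ (ρ Y - ρ B) := by
        refine sum_congr rfl fun A hA => ?_
        obtain ⟨hAXY, rfl⟩ := mem_filter.1 hA
        rw [hloop A (mem_Icc.1 hAXY)]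
    _ = 0 := by rw [← sum_smul, hfiber, sum_mu_of_sup_eq ℤ he, zero_smul]

theorem sum_charPoly_of_inf_eq [DecidableLE L] (hXH : X ≤ H) :
    ∑ y ∈ Ioc X Y with y ⊓ H = X, charPoly (mu ℤ) ρ y Y =
      -∑ A ∈ Icc X Y with ¬ A ≤ H, mu ℤ X A • (Polynomial.X : Polynomial ℤ) ^ (ρ Y - ρ A) := by
  simp only [charPoly_eq_sum_Icc]
  calc ∑ y ∈ Ioc X Y with y ⊓ H = X, ∑ A ∈ Icc y Y,
        mu ℤ y A • (Polynomial.X : Polynomial ℤ) ^ (ρ Y - ρ A)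
      = ∑ A ∈ Icc X Y with ¬ A ≤ H, ∑ y ∈ Ioc X A with y ⊓ H = X,
          mu ℤ y A • Polynomial.X ^ (ρ Y - ρ A) := by
        refine sum_comm' fun y A => ?_
        simp only [mem_filter, mem_Ioc, mem_Icc]
        constructor
        · rintro ⟨⟨⟨hXy, -⟩, hyH⟩, hyA, hAY⟩
          exact ⟨⟨⟨hXy, hyA⟩, hyH⟩, ⟨hXy.le.trans hyA, hAY⟩,
            fun hAH => hXy.ne' (inf_eq_left.2 (hyA.trans hAH) ▸ hyH)⟩
        · rintro ⟨⟨⟨hXy, hyA⟩, hyH⟩, ⟨-, hAY⟩, -⟩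
          exact ⟨⟨⟨hXy, hyA.trans hAY⟩, hyH⟩, hyA, hAY⟩
    _ = -∑ A ∈ Icc X Y with ¬ A ≤ H, mu ℤ X A • Polynomial.X ^ (ρ Y - ρ A) := by
        rw [← sum_neg_distrib]
        refine sum_congr rfl fun A hA => ?_
        obtain ⟨hAXY, hAH⟩ := mem_filter.1 hA
        rw [← sum_smul, sum_Ioc_mu_of_inf_eq ℤ (mem_Icc.1 hAXY).1 hXH hAH, neg_smul]

theorem X_pow_mul_charPoly_eq_sum_filter [DecidableLE L] (hmono : Monotone ρ) (hHY : H ≤ Y) :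
    (Polynomial.X : Polynomial ℤ) ^ (ρ Y - ρ H) * charPoly (mu ℤ) ρ X H =
      ∑ A ∈ Icc X Y with A ≤ H, mu ℤ X A • Polynomial.X ^ (ρ Y - ρ A) := by
  have hfilter : {A ∈ Icc X Y | A ≤ H} = Icc X H := by
    ext A
    simp only [mem_filter, mem_Icc]
    exact ⟨fun h => ⟨h.1.1, h.2⟩, fun h => ⟨⟨h.1, h.2.trans hHY⟩, h.2⟩⟩
  rw [hfilter, charPoly_eq_sum_Icc, mul_sum]
  refine sum_congr rfl fun A hA => ?_
  rw [mul_smul_comm, ← pow_add,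
    tsub_add_tsub_cancel (hmono hHY) (hmono (mem_Icc.1 hA).2)]

theorem X_pow_mul_charPoly_eq_charPoly_add_sum (hmono : Monotone ρ) (hXH : X ≤ H) (hHY : H ≤ Y) :
    (Polynomial.X : Polynomial ℤ) ^ (ρ Y - ρ H) * charPoly (mu ℤ) ρ X H =
      charPoly (mu ℤ) ρ X Y + ∑ y ∈ Ioc X Y with y ⊓ H = X, charPoly (mu ℤ) ρ y Y := by
  classical
  rw [X_pow_mul_charPoly_eq_sum_filter hmono hHY, sum_charPoly_of_inf_eq hXH, charPoly_eq_sum_Icc,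
    ← sum_filter_add_sum_filter_not (Icc X Y) (· ≤ H), add_neg_cancel_right]

end CharPoly

theorem mem_Ioc_and_inf_eq_iff_covBy {L : Type*} [Lattice L] [IsLowerModularLattice L]
    {X Y H y : L} (hXH : X ≤ H) (hHY : H ⋖ Y) :
    y ∈ Set.Ioc X Y ∧ y ⊓ H = X ↔ X ⋖ y ∧ y ≤ Y ∧ ¬ y ≤ H := by
  constructor
  · rintro ⟨⟨hXy, hyY⟩, rfl⟩
    have hyH : ¬ y ≤ H := fun h => hXy.ne (inf_eq_left.2 h)
    have hsup : H ⊔ y = Y :=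
      (hHY.eq_or_eq le_sup_left (sup_le hHY.le hyY)).resolve_left fun h => hyH (sup_eq_left.1 h)
    rw [inf_comm]
    exact ⟨inf_covBy_of_covBy_sup_left (hsup ▸ hHY), hyY, hyH⟩
  · rintro ⟨hXy, hyY, hyH⟩
    exact ⟨⟨hXy.lt, hyY⟩, (hXy.eq_or_eq (le_inf hXy.le hXH) inf_le_left).resolve_right
      fun h => hyH (inf_eq_left.1 h)⟩

theorem charPoly_restriction_of_loop_complement_general {L : Type*} [Lattice L]
    [LocallyFiniteOrder L] {ρ : L → ℕ} (hmono : Monotone ρ)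
    (hsubmod : ∀ A B, ρ (A ⊔ B) + ρ (A ⊓ B) ≤ ρ A + ρ B) {μ : L → L → ℤ}
    (hμ_refl : ∀ X, μ X X = 1)
    (hμ_rec : ∀ X Y, X < Y → μ X Y = -∑ᶠ Z ∈ Set.Ico X Y, μ X Z)
    {X Y H e : L} (hXH : X ≤ H) (heX : ¬ e ≤ X) (heH : e ⊔ H = Y) (hloop : ρ (X ⊔ e) = ρ X) :
    charPoly μ ρ X H = ∑ᶠ y ∈ {y ∈ Set.Ioc X Y | y ⊓ H = X}, charPoly μ ρ y Y := by
  classical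
  have hρ : ∀ A, X ≤ A → ρ (A ⊔ e) = ρ A := fun A => rank_sup_eq_of_loop hmono hsubmod hloop
  have hρY : ρ Y = ρ H := by rw [← heH, sup_comm, hρ H hXH]
  have hindex : {y ∈ Set.Ioc X Y | y ⊓ H = X} =
      ({y ∈ Finset.Ioc X Y | y ⊓ H = X} : Finset L) := by
    ext y
    simp
  have hzero : charPoly (IncidenceAlgebra.mu ℤ) ρ X Y = 0 :=
    charPoly_eq_zero_of_loop heX (heH ▸ le_sup_left) fun A hA => hρ A hA.1
  have hdel := X_pow_mul_charPoly_eq_charPoly_add_sum hmono hXH (heH ▸ le_sup_right : H ≤ Y)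
  rw [hρY, tsub_self, pow_zero, one_mul, hzero, zero_add] at hdel
  simp only [charPoly_eq_charPoly_mu hμ_refl hμ_rec]
  rw [hdel, hindex, finsum_mem_coe_finset]

/-- let `M = (L(E), ρ)` be a `(q,r)`-polymatroid on `E = F_q^n` and `H` a
hyperplane of `E`.  If some complement of `H` is a loop of `M`, then
`P(M|_H; z) = ∑_{y 1-dimensional, y ⊄ H} P(M/y; z)`. -/
theorem charPoly_restriction_of_loop_complement
    {F : Type*} [Field F] [Fintype F] {n : ℕ} (hn : 0 < n)
    (r : ℕ) (hr : 0 < r)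
    (ρ : Submodule F (Fin n → F) → ℕ)
    (hbound : ∀ A : Submodule F (Fin n → F), ρ A ≤ r * Module.finrank F A)
    (hmono : Monotone ρ)
    (hsubmod : ∀ A B : Submodule F (Fin n → F), ρ (A ⊔ B) + ρ (A ⊓ B) ≤ ρ A + ρ B)
    (μ : Submodule F (Fin n → F) → Submodule F (Fin n → F) → ℤ)
    (hμ_refl : ∀ X, μ X X = 1)
    (hμ_rec : ∀ X Y, X < Y → μ X Y = -∑ᶠ Z ∈ Set.Ico X Y, μ X Z)
    (H : Submodule F (Fin n → F)) (hH : IsCoatom H)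
    (hloop : ∃ e : Submodule F (Fin n → F),
      Module.finrank F e = 1 ∧ e ⊓ H = ⊥ ∧ e ⊔ H = ⊤ ∧ ρ e = 0) :
    charPoly μ ρ ⊥ H =
      ∑ᶠ y ∈ {y : Submodule F (Fin n → F) | Module.finrank F y = 1 ∧ ¬ y ≤ H},
        charPoly μ ρ y ⊤ := by
  let : LocallyFiniteOrder (Submodule F (Fin n → F)) :=
    .ofFiniteIcc fun _ _ => Set.toFinite _
  obtain ⟨e, he, -, heH, hρe⟩ := hloop
  have he_bot : ¬ e ≤ ⊥ := fun h => (Submodule.isAtom_iff_finrank_eq_one.2 he).1 (le_bot_iff.1 h)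
  have hρ_bot : ρ (⊥ ⊔ e) = ρ ⊥ := by
    rw [bot_sup_eq]
    exact le_antisymm (hρe ▸ zero_le) (hmono bot_le)
  simpa only [mem_Ioc_and_inf_eq_iff_covBy bot_le (covBy_top_iff.2 hH), bot_covBy_iff,
    Submodule.isAtom_iff_finrank_eq_one, le_top, true_and] using
    charPoly_restriction_of_loop_complement_general hmono hsubmod hμ_refl hμ_rec bot_le he_bot heH
      hρ_bot
end

section
/- Let M = (L(E), ρ) be a (q,r)-polymatroid on E = F_q^n, let H be a hyperplane of E that is a coloop of M (i.e., ρ(H) = ρ(E) − r), and let e be a complement of H (a 1-dimensional subspace with e ∩ H = 0 and e + H = E). Then P(M; z) = P(M|_e; z)·P(M/e; z) − ∑_{y 1-dimensional subspace of E, y ⊄ H, y ≠ e} P(M/y; z) as polynomials in ℤ[z]. -/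
/-!
Möbius inversion of `∑_{A ≤ x ⊓ H} μ(⊥, A) = [x ⊓ H = ⊥]` gives, for an arbitrary `H`,
`∑_{y ⊓ H = ⊥} P(M/y) = z^(ρ(⊤) - ρ(H)) · P(M|_H)`.
If `e` is a complement of `H` with `ρ(e) + ρ(H) = ρ(⊤) + ρ(⊥)`, the diamond isomorphism
`[⊥, H] ≃ [e, ⊤]` preserves rank differences, so `P(M|_H) = P(M/e)`.
When `H` is a coatom, the `y` with `y ⊓ H = ⊥` are `⊥` and the atoms not below `H`; separating the
terms `y = ⊥` and `y = e` and using `P(M|_e) = z^(ρ(e) - ρ(⊥)) - 1` yields the decomposition.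
-/

section Moebius

open Finset IncidenceAlgebra

theorem mu_eq_mu_of_orderIso_Icc {𝕜 α β : Type*} [AddCommGroup 𝕜] [One 𝕜]
    [PartialOrder α] [LocallyFiniteOrder α] [DecidableEq α]
    [PartialOrder β] [LocallyFiniteOrder β] [DecidableEq β]
    {a b : α} {c d : β} (f : Set.Icc a b ≃o Set.Icc c d) (x : Set.Icc a b) :
    mu 𝕜 a x = mu 𝕜 c (f x) := by
  have hab : a ≤ b := x.2.1.trans x.2.2
  have hcd : c ≤ d := (f x).2.1.trans (f x).2.2
  have map_left : f ⟨a, Set.left_mem_Icc.2 hab⟩ = ⟨c, Set.left_mem_Icc.2 hcd⟩ :=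
    le_antisymm (f.le_symm_apply.1 (f.symm _).2.1) (f _).2.1
  induction x using WellFoundedLT.induction with
  | ind x ih =>
    have left_eq_iff : a = x ↔ c = f x := by
      rw [← Subtype.mk_eq_mk (h := Set.left_mem_Icc.2 hab) (h' := x.2), Subtype.coe_eta,
        ← f.injective.eq_iff, map_left, Subtype.ext_iff]
    rw [mu_apply, mu_apply]
    refine if_congr left_eq_iff rfl (congrArg Neg.neg ?_)
    refine sum_bij' (fun z hz ↦ f ⟨z, (mem_Ico.1 hz).1, (mem_Ico.1 hz).2.le.trans x.2.2⟩)
      (fun w hw ↦ f.symm ⟨w, (mem_Ico.1 hw).1, (mem_Ico.1 hw).2.le.trans (f x).2.2⟩)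
      ?_ ?_ ?_ ?_ ?_
    · intro z hz
      exact mem_Ico.2 ⟨(f _).2.1, f.lt_iff_lt.2 (mem_Ico.1 hz).2⟩
    · intro w hw
      exact mem_Ico.2 ⟨(f.symm _).2.1, f.symm_apply_lt.2 (mem_Ico.1 hw).2⟩
    · exact fun _ _ ↦ congrArg Subtype.val (f.symm_apply_apply _)
    · exact fun _ _ ↦ congrArg Subtype.val (f.apply_symm_apply _)
    · intro z hz
      exact ih ⟨z, _⟩ (mem_Ico.1 hz).2

theorem eq_mu_of_rec {𝕜 α : Type*} [AddCommGroup 𝕜] [One 𝕜]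
    [PartialOrder α] [LocallyFiniteOrder α] [DecidableEq α]
    {μ : α → α → 𝕜} (hμ_refl : ∀ a, μ a a = 1)
    (hμ_rec : ∀ a b, a < b → μ a b = -∑ᶠ c ∈ Set.Ico a b, μ a c) {a b : α} (hab : a ≤ b) :
    μ a b = mu 𝕜 a b := by
  obtain rfl | hlt := hab.eq_or_lt
  · rw [hμ_refl, mu_self]
  · rw [hμ_rec a b hlt, mu_eq_neg_sum_Ico_of_ne hlt.ne, ← coe_Ico, finsum_mem_coe_finset]
    refine congrArg Neg.neg (sum_congr rfl fun c hc ↦ ?_)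
    exact eq_mu_of_rec hμ_refl hμ_rec (mem_Ico.1 hc).1
termination_by (Icc a b).card
decreasing_by exact card_lt_card (Icc_ssubset_Icc_right hab le_rfl (mem_Ico.1 hc).2)

theorem sum_Iic_disjoint_mu {𝕜 L : Type*} [Ring 𝕜] [Lattice L] [OrderBot L] [LocallyFiniteOrder L]
    [DecidableEq L] [DecidableLE L] (H A : L) [DecidablePred (Disjoint · H)] :
    ∑ y ∈ Iic A with Disjoint y H, mu 𝕜 y A = if A ≤ H then mu 𝕜 ⊥ A else 0 := by
  have sum_lower (x : L) : (if Disjoint x H then 1 else 0) =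
      ∑ B ∈ Iic x, if B ≤ H then mu 𝕜 ⊥ B else 0 := by
    have lower_inf : {B ∈ Iic x | B ≤ H} = Icc ⊥ (x ⊓ H) := by ext; simp
    rw [← sum_filter, lower_inf, sum_Icc_mu_right]
    simp only [disjoint_iff, eq_comm]
  rw [sum_filter]
  simpa using (moebius_inversion_bot _ _ sum_lower A).symm

end Moebius

section CharPoly

open Finset IncidenceAlgebra Polynomial

variable {L : Type*} [Lattice L]

theorem charPoly_eq_sum [LocallyFiniteOrder L] (μ : L → L → ℤ) (ρ : L → ℕ) (a b : L) :
    charPoly μ ρ a b = ∑ x ∈ Icc a b, μ a x • (X : ℤ[X]) ^ (ρ b - ρ x) := by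
  rw [charPoly, ← coe_Icc, finsum_mem_coe_finset]

theorem charPoly_congr {μ ν : L → L → ℤ} (h : ∀ a b, a ≤ b → μ a b = ν a b) (ρ : L → ℕ) :
    charPoly μ ρ = charPoly ν ρ := by
  funext a b
  exact finsum_mem_congr rfl fun x hx ↦ by rw [h a x hx.1]

theorem rank_sup_sub_rank_sup_right [IsModularLattice L] {ρ : L → ℕ}
    (hsubmod : ∀ a b, ρ (a ⊔ b) + ρ (a ⊓ b) ≤ ρ a + ρ b) {a b x : L}
    (hab : ρ a + ρ b ≤ ρ (a ⊔ b) + ρ (a ⊓ b)) (hx : x ∈ Set.Icc (a ⊓ b) a) :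
    ρ (a ⊔ b) - ρ (x ⊔ b) = ρ a - ρ x := by
  have upper := hsubmod x b
  have lower := hsubmod (x ⊔ b) a
  have inf_b : x ⊓ b = a ⊓ b :=
    le_antisymm (inf_le_inf_right b hx.2) (le_inf hx.1 inf_le_right)
  have inf_a : (x ⊔ b) ⊓ a = x := by
    rw [sup_inf_assoc_of_le b hx.2, inf_comm, sup_eq_left.2 hx.1]
  have sup_a : x ⊔ b ⊔ a = a ⊔ b := by
    rw [sup_right_comm, sup_eq_right.2 hx.2]
  rw [inf_b] at upper
  rw [inf_a, sup_a] at lower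
  omega

section LocallyFinite

variable [LocallyFiniteOrder L] [DecidableEq L] {ρ : L → ℕ}

theorem charPoly_mu_of_covBy {a b : L} (hab : a ⋖ b) :
    charPoly (mu ℤ) ρ a b = X ^ (ρ b - ρ a) - 1 := by
  have Ico_eq : Ico a b = {a} := coe_injective <| by simpa using hab.Ico_eq
  have mu_eq : mu ℤ a b = -1 := by
    rw [mu_eq_neg_sum_Ico_of_ne hab.ne, Ico_eq, sum_singleton, mu_self]
  rw [charPoly, hab.Icc_eq, finsum_mem_pair hab.ne, mu_self, mu_eq]
  simp [sub_eq_add_neg]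

theorem charPoly_mu_sup_eq_inf [IsModularLattice L]
    (hsubmod : ∀ a b, ρ (a ⊔ b) + ρ (a ⊓ b) ≤ ρ a + ρ b) {a b : L}
    (hab : ρ a + ρ b ≤ ρ (a ⊔ b) + ρ (a ⊓ b)) :
    charPoly (mu ℤ) ρ b (a ⊔ b) = charPoly (mu ℤ) ρ (a ⊓ b) a := by
  rw [charPoly, charPoly, ← finsum_set_coe_eq_finsum_mem, ← finsum_set_coe_eq_finsum_mem,
    ← finsum_comp_equiv (infIccOrderIsoIccSup a b).toEquiv]
  refine finsum_congr fun x ↦ ?_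
  rw [mu_eq_mu_of_orderIso_Icc (infIccOrderIsoIccSup a b) x,
    ← rank_sup_sub_rank_sup_right hsubmod hab x.2]
  rfl

theorem finsum_disjoint_charPoly_mu [BoundedOrder L] (hmono : Monotone ρ) (H : L) :
    ∑ᶠ y ∈ {y | Disjoint y H}, charPoly (mu ℤ) ρ y ⊤ =
      X ^ (ρ ⊤ - ρ H) * charPoly (mu ℤ) ρ ⊥ H := by
  classical
  have coe_filter : {y | Disjoint y H} = ((Icc ⊥ ⊤).filter (Disjoint · H) : Set L) := by simp
  have filter_le : {A ∈ Icc (⊥ : L) ⊤ | A ≤ H} = Icc ⊥ H := by ext; simp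
  calc ∑ᶠ y ∈ {y | Disjoint y H}, charPoly (mu ℤ) ρ y ⊤
    _ = ∑ y ∈ Icc ⊥ ⊤ with Disjoint y H, ∑ A ∈ Icc y ⊤, mu ℤ y A • (X : ℤ[X]) ^ (ρ ⊤ - ρ A) := by
      simp only [coe_filter, finsum_mem_coe_finset, charPoly_eq_sum]
    _ = ∑ A ∈ Icc ⊥ ⊤, ∑ y ∈ Iic A with Disjoint y H, mu ℤ y A • (X : ℤ[X]) ^ (ρ ⊤ - ρ A) :=
      sum_comm' fun y A ↦ by simp [and_comm]
    _ = ∑ A ∈ Icc ⊥ H, mu ℤ ⊥ A • (X : ℤ[X]) ^ (ρ ⊤ - ρ A) := by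
      simp only [← sum_smul, sum_Iic_disjoint_mu, ite_smul, zero_smul, ← sum_filter, filter_le]
    _ = X ^ (ρ ⊤ - ρ H) * charPoly (mu ℤ) ρ ⊥ H := by
      rw [charPoly_eq_sum, mul_sum]
      refine sum_congr rfl fun A hA ↦ ?_
      rw [mul_smul_comm, ← pow_add,
        tsub_add_tsub_cancel (hmono le_top) (hmono (mem_Icc.1 hA).2)]

end LocallyFinite

theorem disjoint_iff_eq_bot_or_isAtom_of_isCoatom [BoundedOrder L] [IsModularLattice L] {y H : L}
    (hH : IsCoatom H) : Disjoint y H ↔ y = ⊥ ∨ IsAtom y ∧ ¬ y ≤ H := by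
  constructor
  · intro hdisj
    by_cases hle : y ≤ H
    · exact .inl (hdisj.eq_bot_of_le hle)
    · have hcompl : IsCompl y H := ⟨hdisj, (hH.not_le_iff_codisjoint.1 hle).symm⟩
      exact .inr ⟨hcompl.isAtom_iff_isCoatom.2 hH, hle⟩
  · rintro (rfl | ⟨hy, hle⟩)
    · exact disjoint_bot_left
    · exact hy.not_le_iff_disjoint.1 hle

/-- `hcoloop` encodes the coloop condition `ρ ⊤ = ρ H + r`, `ρ e ≤ r` without mentioning `r`. -/
theorem charPoly_coloop_decomposition_general [BoundedOrder L] [IsModularLattice L] [Finite L]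
    {ρ : L → ℕ} (hmono : Monotone ρ) (hsubmod : ∀ a b, ρ (a ⊔ b) + ρ (a ⊓ b) ≤ ρ a + ρ b)
    {μ : L → L → ℤ} (hμ_refl : ∀ a, μ a a = 1)
    (hμ_rec : ∀ a b, a < b → μ a b = -∑ᶠ c ∈ Set.Ico a b, μ a c)
    {H e : L} (hH : IsCoatom H) (heH : IsCompl e H) (hcoloop : ρ e + ρ H ≤ ρ ⊤ + ρ ⊥) :
    charPoly μ ρ ⊥ ⊤ = charPoly μ ρ ⊥ e * charPoly μ ρ e ⊤
      - ∑ᶠ y ∈ {y | IsAtom y ∧ ¬ y ≤ H ∧ y ≠ e}, charPoly μ ρ y ⊤ := by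
  classical
  let _ := Fintype.ofFinite L
  let _ : LocallyFiniteOrder L := Fintype.toLocallyFiniteOrder
  rw [charPoly_congr (fun _ _ ↦ eq_mu_of_rec hμ_refl hμ_rec) ρ]
  set S : Set L := {y | IsAtom y ∧ ¬ y ≤ H ∧ y ≠ e}
  have he : IsAtom e := heH.isAtom_iff_isCoatom.2 hH
  have heH_not_le : ¬ e ≤ H := he.not_le_iff_disjoint.2 heH.disjoint
  have disjoint_eq : {y | Disjoint y H} = insert ⊥ (insert e S) := by
    ext y
    simp only [S, Set.mem_ofPred_eq, Set.mem_insert_iff,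
      disjoint_iff_eq_bot_or_isAtom_of_isCoatom hH]
    grind
  have rank_eq : ρ ⊤ - ρ H = ρ e - ρ ⊥ := by
    have := hsubmod e H
    rw [heH.sup_eq_top, heH.inf_eq_bot] at this
    omega
  have contract_eq_restrict : charPoly (mu ℤ) ρ e ⊤ = charPoly (mu ℤ) ρ ⊥ H := by
    have := charPoly_mu_sup_eq_inf hsubmod (a := H) (b := e)
    rw [heH.symm.sup_eq_top, heH.symm.inf_eq_bot] at this
    exact this (by omega)
  have complementation := finsum_disjoint_charPoly_mu hmono H
  rw [disjoint_eq, finsum_mem_insert _ (by simp [S, he.1.symm]) (Set.toFinite _),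
    finsum_mem_insert _ (by simp [S]) (Set.toFinite _), rank_eq, ← contract_eq_restrict]
    at complementation
  rw [charPoly_mu_of_covBy (bot_covBy_iff.2 he)]
  linear_combination complementation

end CharPoly

/-- let `M = (L(E), ρ)` be a `(q,r)`-polymatroid on `E = F_q^n`, `H` a
hyperplane of `E` that is a coloop of `M` (`ρ(H) = ρ(E) - r`), and `e` a one-dimensional
complement of `H`.  Then
`P(M; z) = P(M|_e; z) · P(M/e; z) - ∑_{y 1-dimensional, y ⊄ H, y ≠ e} P(M/y; z)`. -/
theorem charPoly_coloop_decomposition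
    {F : Type*} [Field F] [Fintype F] {n : ℕ} (hn : 0 < n)
    (r : ℕ) (hr : 0 < r)
    (ρ : Submodule F (Fin n → F) → ℕ)
    (hbound : ∀ A : Submodule F (Fin n → F), ρ A ≤ r * Module.finrank F A)
    (hmono : Monotone ρ)
    (hsubmod : ∀ A B : Submodule F (Fin n → F), ρ (A ⊔ B) + ρ (A ⊓ B) ≤ ρ A + ρ B)
    (μ : Submodule F (Fin n → F) → Submodule F (Fin n → F) → ℤ)
    (hμ_refl : ∀ X, μ X X = 1)
    (hμ_rec : ∀ X Y, X < Y → μ X Y = -∑ᶠ Z ∈ Set.Ico X Y, μ X Z)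
    (H : Submodule F (Fin n → F)) (hH : IsCoatom H)
    (hcoloop : ρ ⊤ = ρ H + r)
    (e : Submodule F (Fin n → F)) (he : Module.finrank F e = 1)
    (heH : e ⊓ H = ⊥) (heH' : e ⊔ H = ⊤) :
    charPoly μ ρ ⊥ ⊤ =
      charPoly μ ρ ⊥ e * charPoly μ ρ e ⊤
        - ∑ᶠ y ∈ {y : Submodule F (Fin n → F) |
            Module.finrank F y = 1 ∧ ¬ y ≤ H ∧ y ≠ e}, charPoly μ ρ y ⊤ := by
  simp only [← Submodule.isAtom_iff_finrank_eq_one]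
  exact charPoly_coloop_decomposition_general hmono hsubmod hμ_refl hμ_rec hH
    (IsCompl.of_eq heH heH') (by have := hbound e; rw [he, mul_one] at this; omega)
end
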